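/- Let i ≥ 2, L ≥ 1 and nonnegative integers a_1,…,a_i be given, and set K = (i−1)L + Σ_{j=1}^{i} a_j + 1. For every user k ∈ [K], every n ∈ [i−1], and every integer m with a_n + L + 1 ≤ m ≤ K − 1, the following equivalence holds in the (a_i,…,a_1)_L-bar-ICP: (<k+m>_K, n+1) ∈ K_k if and only if (<k+m−a_n−L>_K, n) ∈ K_k. (Equivalently: if node (<k+m>_K, n+1) is a side-information node of user k then so is node (<k+m−a_n−L>_K, n), and if node (<k+m>_K, n+1) is an interference node of user k then so is node (<k+m−a_n−L>_K, n).) -/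

import Mathlib

open Finset

/-- `<m>_n`: the unique element of `{1,…,n}` congruent to `m` modulo `n`. -/
def angMod (m : ℤ) (n : ℕ) : ℕ :=
  if m % (n : ℤ) = 0 then n else (m % (n : ℤ)).toNat

/-- The side-information index set `K_k` of user `k` in the
`(a_i,…,a_1)_L`-bar-ICP, as a set of nodes `(b,t)`. -/
def knownIdx (K i L : ℕ) (a : ℕ → ℕ) (k : ℕ) : Set (ℕ × ℕ) :=
  {p | ∃ t ∈ Finset.Icc 1 i, ∃ v ∈ Finset.Icc 1 (i - 1), ∃ r ∈ Finset.Icc 1 L,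
    p.2 = t ∧
    p.1 = angMod ((k : ℤ) + (∑ j ∈ Finset.Icc 1 v, (a (angMod ((i : ℤ) + (t : ℤ) - (j : ℤ)) i) : ℤ))
        + ((v : ℤ) - 1) * (L : ℤ) + (r : ℤ)) K}

/-!
In column `t`, the offsets `x` for which user `k` knows the node `(<k+x>_K, t)` form `i - 1` blocks
of `L` consecutive integers, independent of `k`. Since the partial sums of column `n + 1` are those
of column `n` prefixed by `a n`, block `v + 1` of column `n + 1` is block `v` of column `n` shifted
by `a n + L`. Two blocks are left unmatched: the first one of column `n + 1`, which ends at
`a n + L < m`, and the shifted last one of column `n`, which lies beyond `K - 1` because the full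
cyclic sum is `∑ a j`.
-/

section AngMod

variable {n : ℕ}

lemma angMod_modEq (hn : 0 < n) (m : ℤ) : (angMod m n : ℤ) ≡ m [ZMOD n] := by
  have hnonneg := Int.emod_nonneg m (by omega : (n : ℤ) ≠ 0)
  unfold angMod
  split_ifs with h
  · simp [Int.ModEq, h]
  · rw [Int.toNat_of_nonneg hnonneg]
    exact Int.mod_modEq m n

lemma angMod_mem_Icc (hn : 0 < n) (m : ℤ) : angMod m n ∈ Icc 1 n := by
  have hnonneg := Int.emod_nonneg m (by omega : (n : ℤ) ≠ 0)
  have hlt := Int.emod_lt_of_pos m (by omega : (0 : ℤ) < n)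
  rw [mem_Icc]
  unfold angMod
  split_ifs <;> omega

lemma angMod_eq_of_modEq {x y : ℤ} (h : x ≡ y [ZMOD n]) : angMod x n = angMod y n := by
  simp only [angMod, h.eq]

lemma angMod_natCast {b : ℕ} (hb : b ∈ Icc 1 n) : angMod b n = b := by
  rw [mem_Icc] at hb
  obtain rfl | hlt := hb.2.eq_or_lt
  · simp [angMod]
  · have hmod : (b : ℤ) % n = b := Int.emod_eq_of_lt (by omega) (by omega)
    rw [angMod, hmod, if_neg (by omega), Int.toNat_natCast]

lemma angMod_add_natCast_inj {k : ℤ} {x y : ℕ} (hx : x < n) (hy : y < n) :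
    angMod (k + x) n = angMod (k + y) n ↔ x = y := by
  refine ⟨fun h ↦ ?_, fun h ↦ by rw [h]⟩
  have hn : 0 < n := by omega
  have hmod : k + x ≡ k + y [ZMOD n] :=
    (angMod_modEq hn _).symm.trans (h ▸ angMod_modEq hn _)
  exact (Int.natCast_modEq_iff.1 (hmod.add_left_cancel' k)).eq_of_lt_of_lt hx hy

lemma angMod_sub_angMod_sub (c : ℤ) {j : ℕ} (hj : j ∈ Icc 1 n) :
    angMod (c - angMod (c - j) n) n = j := by
  have hn : 0 < n := by rw [mem_Icc] at hj; omega
  have hmod : c - angMod (c - j) n ≡ c - (c - j) [ZMOD n] := (angMod_modEq hn _).sub_left c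
  rw [angMod_eq_of_modEq hmod, sub_sub_cancel, angMod_natCast hj]

lemma sum_angMod_sub {M : Type*} [AddCommMonoid M] (c : ℤ) (f : ℕ → M) :
    ∑ j ∈ Icc 1 n, f (angMod (c - j) n) = ∑ j ∈ Icc 1 n, f j := by
  have hmem : ∀ j ∈ Icc 1 n, angMod (c - j) n ∈ Icc 1 n := fun j hj ↦
    angMod_mem_Icc (by rw [mem_Icc] at hj; omega) _
  exact sum_nbij' (fun j ↦ angMod (c - j) n) (fun j ↦ angMod (c - j) n) hmem hmem
    (fun _ ↦ angMod_sub_angMod_sub c) (fun _ ↦ angMod_sub_angMod_sub c) fun _ _ ↦ rfl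

end AngMod

/-- The sum `a_{<i+t-1>_i} + ⋯ + a_{<i+t-v>_i}` of the `v` entries that cyclically precede
position `t`, which positions the blocks of known nodes in column `t`. -/
def cyclicSum {M : Type*} [AddCommMonoid M] (i : ℕ) (a : ℕ → M) (t v : ℕ) : M :=
  ∑ j ∈ Icc 1 v, a (angMod ((i : ℤ) + t - j) i)

section CyclicSum

variable {M : Type*} [AddCommMonoid M] {i : ℕ} (a : ℕ → M)

lemma cyclicSum_self (t : ℕ) : cyclicSum i a t i = ∑ j ∈ Icc 1 i, a j :=
  sum_angMod_sub _ a

lemma cyclicSum_le_sum [PartialOrder M] [IsOrderedAddMonoid M] [CanonicallyOrderedAdd M]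
    (t : ℕ) {v : ℕ} (hv : v ≤ i) : cyclicSum i a t v ≤ ∑ j ∈ Icc 1 i, a j :=
  (sum_le_sum_of_subset (Icc_subset_Icc_right hv)).trans_eq (cyclicSum_self a t)

lemma cyclicSum_succ_right (t v : ℕ) :
    cyclicSum i a t (v + 1) = cyclicSum i a t v + a (angMod ((i : ℤ) + t - (v + 1 : ℕ)) i) :=
  sum_Icc_succ_top (by omega) _

lemma cyclicSum_succ_one {n : ℕ} (hn : n ∈ Icc 1 i) : cyclicSum i a (n + 1) 1 = a n := by
  have hangMod : angMod ((i : ℤ) + n) i = n := by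
    rw [angMod_eq_of_modEq Int.add_modEq_left, angMod_natCast hn]
  simp [cyclicSum, ← add_assoc, hangMod]

lemma cyclicSum_succ_succ {n : ℕ} (hn : n ∈ Icc 1 i) (v : ℕ) :
    cyclicSum i a (n + 1) (v + 1) = a n + cyclicSum i a n v := by
  induction v with
  | zero =>
    rw [zero_add, cyclicSum_succ_one a hn]
    simp [cyclicSum]
  | succ v ih =>
    have hindex : (i : ℤ) + (n + 1 : ℕ) - (v + 1 + 1 : ℕ) = i + n - (v + 1 : ℕ) := by
      push_cast; ring
    rw [cyclicSum_succ_right, ih, cyclicSum_succ_right a n, hindex, add_assoc]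

end CyclicSum

/-- The `v`-th block of `L` consecutive offsets in column `t`. Blocks are numbered from `0`, so that
no truncated subtraction occurs: block `v` corresponds to `v + 1` in the definition of `K_k`. -/
def offsetBlock (i L : ℕ) (a : ℕ → ℕ) (t v : ℕ) : Finset ℕ :=
  Ioc (cyclicSum i a t (v + 1) + v * L) (cyclicSum i a t (v + 1) + v * L + L)

/-- The offsets `x` for which every user `k` has the node `(<k+x>_K, t)` as side information. -/
def sideInfoOffsets (i L : ℕ) (a : ℕ → ℕ) (t : ℕ) : Finset ℕ :=
  (range (i - 1)).biUnion (offsetBlock i L a t)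

section Offsets

variable {i L : ℕ} {a : ℕ → ℕ} {x : ℕ}

lemma mem_sideInfoOffsets {t : ℕ} :
    x ∈ sideInfoOffsets i L a t ↔ ∃ v < i - 1, x ∈ offsetBlock i L a t v := by
  simp only [sideInfoOffsets, mem_biUnion, mem_range]

lemma offsetBlock_succ_zero {n : ℕ} (hn : n ∈ Icc 1 i) :
    offsetBlock i L a (n + 1) 0 = Ioc (a n) (a n + L) := by
  simp only [offsetBlock, zero_add, zero_mul, add_zero, cyclicSum_succ_one a hn]

lemma add_mem_offsetBlock_succ_succ {n : ℕ} (hn : n ∈ Icc 1 i) (v : ℕ) :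
    a n + L + x ∈ offsetBlock i L a (n + 1) (v + 1) ↔ x ∈ offsetBlock i L a n v := by
  simp only [offsetBlock, mem_Ioc, cyclicSum_succ_succ a hn (v + 1), add_one_mul]
  omega

lemma lt_of_mem_offsetBlock_pred (hi : 0 < i) {t : ℕ} (hx : x ∈ offsetBlock i L a t (i - 1)) :
    (i - 1) * L + ∑ j ∈ Icc 1 i, a j < x := by
  rw [offsetBlock, Nat.sub_add_cancel hi, cyclicSum_self, mem_Ioc] at hx
  omega

lemma le_of_mem_sideInfoOffsets {t : ℕ} (hx : x ∈ sideInfoOffsets i L a t) :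
    x ≤ (i - 1) * L + ∑ j ∈ Icc 1 i, a j := by
  obtain ⟨v, hv, hx⟩ := mem_sideInfoOffsets.1 hx
  calc x ≤ cyclicSum i a t (v + 1) + v * L + L := (mem_Ioc.1 hx).2
    _ = (v + 1) * L + cyclicSum i a t (v + 1) := by ring
    _ ≤ (i - 1) * L + ∑ j ∈ Icc 1 i, a j :=
      add_le_add (Nat.mul_le_mul_right L hv) (cyclicSum_le_sum a t (by omega))

lemma add_mem_sideInfoOffsets_succ {n : ℕ} (hn : n ∈ Icc 1 i) (hpos : 0 < x)
    (hle : a n + L + x ≤ (i - 1) * L + ∑ j ∈ Icc 1 i, a j) :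
    a n + L + x ∈ sideInfoOffsets i L a (n + 1) ↔ x ∈ sideInfoOffsets i L a n := by
  simp only [mem_sideInfoOffsets]
  constructor
  · rintro ⟨_ | v, hv, hx⟩
    · rw [offsetBlock_succ_zero hn, mem_Ioc] at hx
      omega
    · exact ⟨v, by omega, (add_mem_offsetBlock_succ_succ hn v).1 hx⟩
  · rintro ⟨v, hv, hx⟩
    have hshift := (add_mem_offsetBlock_succ_succ hn v).2 hx
    have hne : v + 1 ≠ i - 1 := fun hlast ↦
      hle.not_gt (lt_of_mem_offsetBlock_pred (by omega) (hlast ▸ hshift))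
    exact ⟨v + 1, by omega, hshift⟩

lemma mem_knownIdx_iff {K k b t : ℕ} :
    (b, t) ∈ knownIdx K i L a k ↔
      t ∈ Icc 1 i ∧ ∃ y ∈ sideInfoOffsets i L a t, b = angMod ((k : ℤ) + y) K := by
  constructor
  · rintro ⟨_, ht, v, hv, r, hr, rfl, hb⟩
    rw [mem_Icc] at hv hr
    obtain ⟨v, rfl⟩ := Nat.exists_eq_add_of_le' hv.1
    refine ⟨ht, cyclicSum i a t (v + 1) + v * L + r,
      mem_sideInfoOffsets.2 ⟨v, hv.2, mem_Ioc.2 (by omega)⟩, hb.trans ?_⟩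
    congr 1
    simp only [cyclicSum]
    push_cast
    ring
  · rintro ⟨ht, y, hy, rfl⟩
    obtain ⟨v, hv, hy⟩ := mem_sideInfoOffsets.1 hy
    rw [offsetBlock, mem_Ioc] at hy
    obtain ⟨r, rfl⟩ := Nat.exists_eq_add_of_le hy.1.le
    refine ⟨t, ht, v + 1, mem_Icc.2 (by omega), r, mem_Icc.2 (by omega), rfl, ?_⟩
    simp only [cyclicSum]
    congr 1
    push_cast
    ring

lemma angMod_mem_knownIdx_iff {K k t : ℕ} (hK : (i - 1) * L + ∑ j ∈ Icc 1 i, a j < K)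
    (ht : t ∈ Icc 1 i) (hx : x < K) :
    (angMod ((k : ℤ) + x) K, t) ∈ knownIdx K i L a k ↔ x ∈ sideInfoOffsets i L a t := by
  rw [mem_knownIdx_iff]
  constructor
  · rintro ⟨-, y, hy, hxy⟩
    have hyK : y < K := (le_of_mem_sideInfoOffsets hy).trans_lt hK
    rwa [(angMod_add_natCast_inj hx hyK).1 hxy]
  · exact fun hmem ↦ ⟨ht, x, hmem, rfl⟩

end Offsets

/-- Lemma 8 of the paper: for every user `k ∈ [K]`, every
`n ∈ [i−1]` and every `m` with `a_n + L + 1 ≤ m ≤ K − 1`, node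
`(<k+m>_K, n+1)` is a side-information node of user `k` if and only if node
`(<k+m−a_n−L>_K, n)` is. -/
theorem stmt7 (i L : ℕ) (hi : 2 ≤ i) (hL : 1 ≤ L) (a : ℕ → ℕ)
    (K : ℕ) (hK : K = (i - 1) * L + (∑ j ∈ Finset.Icc 1 i, a j) + 1)
    (k : ℕ) (hk : k ∈ Finset.Icc 1 K)
    (n : ℕ) (hn : n ∈ Finset.Icc 1 (i - 1))
    (m : ℕ) (hm₁ : a n + L + 1 ≤ m) (hm₂ : m ≤ K - 1) :
    (angMod ((k : ℤ) + (m : ℤ)) K, n + 1) ∈ knownIdx K i L a k ↔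
      (angMod ((k : ℤ) + (m : ℤ) - (a n : ℤ) - (L : ℤ)) K, n) ∈ knownIdx K i L a k := by
  rw [mem_Icc] at hn
  obtain ⟨x, rfl⟩ := Nat.exists_eq_add_of_le (show a n + L ≤ m by omega)
  have hindex : (k : ℤ) + (a n + L + x : ℕ) - a n - L = k + x := by push_cast; ring
  rw [hindex, angMod_mem_knownIdx_iff (by omega) (mem_Icc.2 (by omega)) (by omega),
    angMod_mem_knownIdx_iff (by omega) (mem_Icc.2 (by omega)) (by omega)]
  exact add_mem_sideInfoOffsets_succ (mem_Icc.2 (by omega)) (by omega) (by omega)
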